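/- If positive integers x₁, x₂, y₁, y₂ satisfy (3^x₁ - 1)(3^x₂ - 1) = (5^y₁ - 1)(5^y₂ - 1) and 3^x₁ < 5^y₁, then |(3^x₁ - 1)·3^x₂/5^(y₁+y₂) - 1| < 3/5^y₁. -/

import Mathlib

theorem per_mod (g N M k : ℕ) (h : g ^ (k + M) ≡ g ^ k [MOD N]) (hk : k ≤ M) (x : ℕ) (hx : k ≤ x) :
    g ^ x ≡ g ^ (x % M + M) [MOD N] := by
  have key : ∀ q e : ℕ, k ≤ e → g ^ (e + M * q) ≡ g ^ e [MOD N] := by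
    intro q
    induction q with
    | zero => intro e _; simpa using Nat.ModEq.refl _
    | succ q ih =>
      intro e he
      have h1 : g ^ (e + M * (q + 1)) ≡ g ^ (e + M) [MOD N] := by
        have := ih (e + M) (by omega)
        rwa [show e + M + M * q = e + M * (q + 1) by ring] at this
      refine h1.trans ?_
      have h2 := h.mul_left (g ^ (e - k))
      rw [← pow_add, ← pow_add] at h2
      rwa [show e - k + (k + M) = e + M by omega, show e - k + k = e by omega] at h2
  have h3 := key 1 x hx
  have h4 := key (x / M) (x % M + M) (by omega)
  have h5 : x % M + M + M * (x / M) = x + M * 1 := by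
    have := Nat.mod_add_div x M
    omega
  rw [h5] at h4
  exact h3.symm.trans h4

theorem pred_mod {a b N : ℕ} (ha : 1 ≤ a) (hb : 1 ≤ b) (h : a ≡ b [MOD N]) :
    a - 1 ≡ b - 1 [MOD N] := by
  apply Nat.ModEq.add_right_cancel' 1
  rwa [Nat.sub_add_cancel ha, Nat.sub_add_cancel hb]

theorem per_pred (g N M k : ℕ) (hg : 1 ≤ g) (h : g ^ (k + M) ≡ g ^ k [MOD N]) (hk : k ≤ M)
    (x : ℕ) (hx : k ≤ x) : g ^ x - 1 ≡ g ^ (x % M + M) - 1 [MOD N] :=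
  pred_mod (Nat.one_le_pow _ _ hg) (Nat.one_le_pow _ _ hg) (per_mod g N M k h hk x hx)

theorem sieve1 : ∀ a < 12, ∀ b < 12, ∀ c < 12, ∀ d < 12,
    ((3 ^ (a + 12) - 1) * (3 ^ (b + 12) - 1)) % 4095 ≠
    ((5 ^ (c + 12) - 1) * (5 ^ (d + 12) - 1)) % 4095 := by
  decide +kernel

theorem sieve2 : ∀ b < 36, ∀ c < 36, ∀ d < 36,
    (2 * (3 ^ (b + 36) - 1)) % 17955 ≠
    ((5 ^ (c + 36) - 1) * (5 ^ (d + 36) - 1)) % 17955 := by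
  decide +kernel

theorem caseI (x₁ x₂ y₁ y₂ : ℕ) (hx₁ : 2 ≤ x₁) (hx₂ : 2 ≤ x₂) (hy₁ : 0 < y₁) (hy₂ : 0 < y₂) :
    (3 ^ x₁ - 1) * (3 ^ x₂ - 1) ≠ (5 ^ y₁ - 1) * (5 ^ y₂ - 1) := by
  intro h
  have A := fun x hx => per_pred 3 4095 12 2 (by norm_num) (by decide +kernel) (by norm_num) x hx
  have B := fun x hx => per_pred 5 4095 12 1 (by norm_num) (by decide +kernel) (by norm_num) x hx
  have L := (A x₁ hx₁).mul (A x₂ hx₂)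
  have R := (B y₁ hy₁).mul (B y₂ hy₂)
  rw [h] at L
  exact sieve1 _ (Nat.mod_lt _ (by norm_num)) _ (Nat.mod_lt _ (by norm_num))
    _ (Nat.mod_lt _ (by norm_num)) _ (Nat.mod_lt _ (by norm_num)) (L.symm.trans R)

theorem caseII (x y₁ y₂ : ℕ) (hx : 3 ≤ x) (hy₁ : 0 < y₁) (hy₂ : 0 < y₂) :
    2 * (3 ^ x - 1) ≠ (5 ^ y₁ - 1) * (5 ^ y₂ - 1) := by
  intro h
  have A := per_pred 3 17955 36 3 (by norm_num) (by decide +kernel) (by norm_num) x hx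
  have B := fun x hx => per_pred 5 17955 36 1 (by norm_num) (by decide +kernel) (by norm_num) x hx
  have L := A.mul_left 2
  have R := (B y₁ hy₁).mul (B y₂ hy₂)
  rw [h] at L
  exact sieve2 _ (Nat.mod_lt _ (by norm_num)) _ (Nat.mod_lt _ (by norm_num))
    _ (Nat.mod_lt _ (by norm_num)) (L.symm.trans R)

theorem caseIII (x y₁ y₂ : ℕ) (hx : 0 < x) (hy₁ : 0 < y₁) (hy₂ : 0 < y₂)
    (h : 2 * (3 ^ x - 1) = (5 ^ y₁ - 1) * (5 ^ y₂ - 1)) : y₁ ≤ y₂ := by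
  by_contra hlt
  have hx3 : x < 3 := by
    by_contra h3
    exact caseII x y₁ y₂ (by omega) hy₁ hy₂ h
  have h1 : 5 ^ 2 ≤ 5 ^ y₁ := Nat.pow_le_pow_right (by norm_num) (by omega)
  have h2 : 5 ^ 1 ≤ 5 ^ y₂ := Nat.pow_le_pow_right (by norm_num) (by omega)
  have h3 : 24 * 4 ≤ (5 ^ y₁ - 1) * (5 ^ y₂ - 1) := Nat.mul_le_mul (by omega) (by omega)
  rw [← h] at h3
  interval_cases x <;> omega

theorem y_le (x₁ x₂ y₁ y₂ : ℕ) (hx₁ : 0 < x₁) (hx₂ : 0 < x₂) (hy₁ : 0 < y₁) (hy₂ : 0 < y₂)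
    (h : (3 ^ x₁ - 1) * (3 ^ x₂ - 1) = (5 ^ y₁ - 1) * (5 ^ y₂ - 1)) : y₁ ≤ y₂ := by
  by_cases h1 : x₁ = 1
  · subst h1
    exact caseIII x₂ y₁ y₂ hx₂ hy₁ hy₂ (by simpa using h)
  by_cases h2 : x₂ = 1
  · subst h2
    exact caseIII x₁ y₁ y₂ hx₁ hy₁ hy₂ (by rw [← h, mul_comm]; norm_num)
  exact absurd h (caseI x₁ x₂ y₁ y₂ (by omega) (by omega) hy₁ hy₂)

theorem stmt14 (x₁ x₂ y₁ y₂ : ℕ) (hx₁ : 0 < x₁) (hx₂ : 0 < x₂) (hy₁ : 0 < y₁) (hy₂ : 0 < y₂)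
    (h : (3 ^ x₁ - 1) * (3 ^ x₂ - 1) = (5 ^ y₁ - 1) * (5 ^ y₂ - 1))
    (hlt : 3 ^ x₁ < 5 ^ y₁) :
    |((3 : ℝ) ^ x₁ - 1) * 3 ^ x₂ / 5 ^ (y₁ + y₂) - 1| < 3 / 5 ^ y₁ := by
  have hy := y_le x₁ x₂ y₁ y₂ hx₁ hx₂ hy₁ hy₂ h
  have hR : ((3 : ℝ) ^ x₁ - 1) * (3 ^ x₂ - 1) = (5 ^ y₁ - 1) * (5 ^ y₂ - 1) := by
    have e : ∀ g n : ℕ, 1 ≤ g → ((g ^ n - 1 : ℕ) : ℝ) = (g : ℝ) ^ n - 1 := by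
      intro g n hg
      rw [Nat.cast_sub (Nat.one_le_pow _ _ hg)]
      simp
    have := congrArg (Nat.cast : ℕ → ℝ) h
    rw [Nat.cast_mul, Nat.cast_mul, e 3 _ (by norm_num), e 3 _ (by norm_num),
      e 5 _ (by norm_num), e 5 _ (by norm_num)] at this
    exact_mod_cast this
  have hltR : (3 : ℝ) ^ x₁ < 5 ^ y₁ := by exact_mod_cast hlt
  have hAB : (5 : ℝ) ^ y₁ ≤ 5 ^ y₂ := pow_le_pow_right₀ (by norm_num) hy
  have ha : (0 : ℝ) < 3 ^ x₁ := by positivity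
  have hA : (0 : ℝ) < 5 ^ y₁ := by positivity
  have hB : (0 : ℝ) < 5 ^ y₂ := by positivity
  rw [pow_add]
  generalize (3 : ℝ) ^ x₁ = a at *
  generalize (3 : ℝ) ^ x₂ = b at *
  generalize (5 : ℝ) ^ y₁ = A at *
  generalize (5 : ℝ) ^ y₂ = B at *
  have e1 : (a - 1) * b / (A * B) - 1 = (a - A - B) / (A * B) := by
    field_simp
    linarith
  have e2 : 3 / A = 3 * B / (A * B) := by field_simp
  rw [e1, e2, abs_div, abs_of_pos (mul_pos hA hB)]
  apply div_lt_div_of_pos_right _ (mul_pos hA hB)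
  rw [abs_lt]
  constructor <;> linarith
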